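/- Let b ∈ ℂ with Re b > 0 and Im b > 0, and let φ_b be the non-compact quantum dilogarithm given by the product formula. Then for every z ∈ ℂ at which the denominator products defining φ_b(z + ib⁻¹/2) and φ_b(z − ib⁻¹/2) are nonzero, one has the functional equation φ_b(z + ib⁻¹/2) = (1 + e^{2πzb⁻¹})·φ_b(z − ib⁻¹/2). -/

import Mathlib

/-!
The shift `z ↦ z + i b⁻¹` multiplies `e^{2πzb}` by `e^{2πi} = 1`, so the two denominators agree.
With `X = -e^{2πzb⁻¹}` and `y = q̄²`, the two numerators are `(X; y)_∞` and `(X y; y)_∞`, which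
differ by the first factor `1 - X = 1 + e^{2πzb⁻¹}`. Splitting off that factor uses convergence of
the product, hence `|q̄²| < 1`, which holds because `Im (b⁻²) < 0`.
-/


open Complex

/-- The infinite product `(x;y)_∞ = ∏_{j=0}^∞ (1 − x yʲ)`. -/
noncomputable def qPochInf (x y : ℂ) : ℂ := ∏' j : ℕ, (1 - x * y ^ j)

/-- `c_b = i(b + b⁻¹)/2`. -/
noncomputable def cb (b : ℂ) : ℂ := Complex.I * (b + b⁻¹) / 2

/-- Numerator product of the non-compact quantum dilogarithm:
`(e^{2π(z−c_b)b⁻¹}; q̄²)_∞` with `q̄² = e^{−2πib⁻²}`. -/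
noncomputable def phibNum (b z : ℂ) : ℂ :=
  qPochInf (Complex.exp (2 * (Real.pi : ℂ) * (z - cb b) * b⁻¹))
    (Complex.exp (-(2 * (Real.pi : ℂ) * Complex.I * b⁻¹ ^ 2)))

/-- Denominator product of the non-compact quantum dilogarithm:
`(e^{2π(z+c_b)b}; q²)_∞` with `q² = e^{2πib²}`. -/
noncomputable def phibDen (b z : ℂ) : ℂ :=
  qPochInf (Complex.exp (2 * (Real.pi : ℂ) * (z + cb b) * b))
    (Complex.exp (2 * (Real.pi : ℂ) * Complex.I * b ^ 2))

/-- The non-compact quantum dilogarithm, in product form. -/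
noncomputable def phib (b z : ℂ) : ℂ := phibNum b z / phibDen b z

theorem qPochInf_eq_mul (x y : ℂ) (hy : ‖y‖ < 1) :
    qPochInf x y = (1 - x) * qPochInf (x * y) y := by
  have hs : Summable fun j : ℕ => ‖-(x * y ^ (j + 1))‖ := by
    have h := ((summable_geometric_of_lt_one (norm_nonneg y) hy).mul_left ‖x * y‖)
    refine h.congr fun j => ?_
    rw [norm_neg, ← norm_pow, ← norm_mul]
    congr 1
    ring
  have hm : Multipliable fun j : ℕ => 1 - x * y ^ (j + 1) := by
    simpa only [sub_eq_add_neg] using multipliable_one_add_of_summable hs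
  unfold qPochInf
  rw [tprod_eq_zero_mul' (f := fun j : ℕ => 1 - x * y ^ j) hm, pow_zero, mul_one]
  congr 1
  refine tprod_congr fun j => ?_
  ring

theorem norm_qbar_sq_lt_one (b : ℂ) (hre : 0 < b.re) (him : 0 < b.im) :
    ‖Complex.exp (-(2 * (Real.pi : ℂ) * Complex.I * b⁻¹ ^ 2))‖ < 1 := by
  have hN : 0 < Complex.normSq b := Complex.normSq_pos.2 fun h => by simp [h] at hre
  have h1 : 0 < b⁻¹.re := by rw [Complex.inv_re]; positivity
  have h2 : b⁻¹.im < 0 := by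
    rw [Complex.inv_im]; exact div_neg_of_neg_of_pos (neg_neg_of_pos him) hN
  rw [Complex.norm_exp, Real.exp_lt_one_iff]
  have h3 : (-(2 * (Real.pi : ℂ) * Complex.I * b⁻¹ ^ 2)).re
      = 4 * Real.pi * (b⁻¹.re * b⁻¹.im) := by
    generalize b⁻¹ = c
    simp [pow_two]
    ring
  rw [h3]
  exact mul_neg_of_pos_of_neg (by positivity) (mul_neg_of_pos_of_neg h1 h2)

theorem phibDen_shift (b z : ℂ) (hb : b ≠ 0) :
    phibDen b (z + Complex.I * b⁻¹ / 2) = phibDen b (z - Complex.I * b⁻¹ / 2) := by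
  unfold phibDen
  congr 1
  rw [← Complex.exp_periodic (2 * (Real.pi : ℂ) * (z - Complex.I * b⁻¹ / 2 + cb b) * b)]
  congr 1
  field_simp
  ring

theorem phibNum_shift (b z : ℂ) (hre : 0 < b.re) (him : 0 < b.im) :
    phibNum b (z + Complex.I * b⁻¹ / 2)
      = (1 + Complex.exp (2 * (Real.pi : ℂ) * z * b⁻¹)) *
        phibNum b (z - Complex.I * b⁻¹ / 2) := by
  have hb : b ≠ 0 := fun h => by simp [h] at hre
  have e1 : Complex.exp (2 * (Real.pi : ℂ) * (z + Complex.I * b⁻¹ / 2 - cb b) * b⁻¹)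
      = -Complex.exp (2 * (Real.pi : ℂ) * z * b⁻¹) := by
    rw [← Complex.exp_sub_pi_mul_I]
    congr 1
    unfold cb
    field_simp
    ring
  have e2 : Complex.exp (2 * (Real.pi : ℂ) * (z - Complex.I * b⁻¹ / 2 - cb b) * b⁻¹)
      = -Complex.exp (2 * (Real.pi : ℂ) * z * b⁻¹) *
        Complex.exp (-(2 * (Real.pi : ℂ) * Complex.I * b⁻¹ ^ 2)) := by
    rw [← e1, ← Complex.exp_add]
    congr 1
    field_simp
    ring
  unfold phibNum
  rw [e1, e2, qPochInf_eq_mul _ _ (norm_qbar_sq_lt_one b hre him), sub_neg_eq_add]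

/-- Dual shift functional equation for the non-compact quantum dilogarithm:
`φ_b(z + ib⁻¹/2) = (1 + e^{2πzb⁻¹}) φ_b(z − ib⁻¹/2)` wherever both sides are defined. -/
theorem phib_shift_binv (b : ℂ) (hre : 0 < b.re) (him : 0 < b.im) :
    ∀ z : ℂ, phibDen b (z + Complex.I * b⁻¹ / 2) ≠ 0 →
      phibDen b (z - Complex.I * b⁻¹ / 2) ≠ 0 →
      phib b (z + Complex.I * b⁻¹ / 2)
        = (1 + Complex.exp (2 * (Real.pi : ℂ) * z * b⁻¹)) *
          phib b (z - Complex.I * b⁻¹ / 2) := by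
  intro z _ _
  have hb : b ≠ 0 := fun h => by simp [h] at hre
  unfold phib
  rw [phibNum_shift b z hre him, phibDen_shift b z hb, mul_div_assoc]
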